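/- Let Θ and 𝒴 be measurable spaces, μ a σ-finite measure on 𝒴, and f : 𝒴 × Θ → [0,∞) jointly measurable with ∫ f(y,θ) dμ(y) = 1 for every θ. For a probability measure G on Θ set f_G(y) = ∫ f(y,θ) dG(θ). Fix observations y₁,…,yₙ ∈ 𝒴, and suppose Ĝ₁ and Ĝ₂ both maximize the likelihood G ↦ ∏_{i=1}^n f_G(yᵢ) over all probability measures G on Θ, with the maximal likelihood value strictly positive and finite. Then f_{Ĝ₁}(yᵢ) = f_{Ĝ₂}(yᵢ) for every i = 1,…,n. -/

import Mathlib

open MeasureTheory ENNReal NNReal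

/-!
The fitted values `f_G (y i)` are affine in `G`, while by the AM-GM inequality `∏ i, x i` is
strictly log-concave in the vector `x` of positive entries. So if two maximizers had different
fitted values at the observations, their average would have a strictly larger likelihood.
-/

section StrictLogConcavity

variable {ι K : Type*} [Semifield K] [LinearOrder K] [IsStrictOrderedRing K] [ExistsAddOfLE K]

theorem mul_lt_half_add_sq {a b : K} (hab : a ≠ b) : a * b < ((a + b) / 2) ^ 2 := by
  wlog hlt : a < b generalizing a b
  · rw [mul_comm, add_comm]
    exact this hab.symm (hab.lt_or_gt.resolve_left hlt)
  obtain ⟨c, hc, rfl⟩ := exists_pos_add_of_lt' hlt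
  calc a * (a + c) < a * (a + c) + (c / 2) ^ 2 := lt_add_of_pos_right _ (by positivity)
    _ = ((a + (a + c)) / 2) ^ 2 := by field

theorem mul_le_half_add_sq (a b : K) : a * b ≤ ((a + b) / 2) ^ 2 := by
  obtain rfl | hab := eq_or_ne a b
  · rw [add_self_div_two, sq]
  · exact (mul_lt_half_add_sq hab).le

theorem prod_lt_prod_half_add {s : Finset ι} {a b : ι → K} (ha : ∀ i ∈ s, 0 < a i)
    (hb : ∀ i ∈ s, 0 < b i) (hprod : ∏ i ∈ s, a i = ∏ i ∈ s, b i) (hne : ∃ i ∈ s, a i ≠ b i) :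
    ∏ i ∈ s, a i < ∏ i ∈ s, (a i + b i) / 2 := by
  have hmid : ∀ i ∈ s, 0 ≤ (a i + b i) / 2 := fun i hi =>
    div_nonneg (add_pos (ha i hi) (hb i hi)).le zero_le_two
  refine lt_of_pow_lt_pow_left₀ 2 (Finset.prod_nonneg hmid) ?_
  calc (∏ i ∈ s, a i) ^ 2 = ∏ i ∈ s, a i * b i := by rw [Finset.prod_mul_distrib, ← hprod, sq]
    _ < ∏ i ∈ s, ((a i + b i) / 2) ^ 2 :=
      Finset.prod_lt_prod (fun i hi => mul_pos (ha i hi) (hb i hi))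
        (fun i _ => mul_le_half_add_sq (a i) (b i))
        (hne.imp fun _ h => ⟨h.1, mul_lt_half_add_sq h.2⟩)
    _ = (∏ i ∈ s, (a i + b i) / 2) ^ 2 := Finset.prod_pow ..

end StrictLogConcavity

section ENNRealProducts

variable {ι : Type*}

theorem ennreal_ne_top_of_prod_ne_top {s : Finset ι} {a : ι → ℝ≥0∞} (hpos : ∏ i ∈ s, a i ≠ 0)
    (hfin : ∏ i ∈ s, a i ≠ ∞) {i : ι} (hi : i ∈ s) : a i ≠ ∞ :=
  fun htop => hfin (WithTop.prod_eq_top hi htop (Finset.prod_ne_zero_iff.mp hpos))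

theorem ennreal_prod_lt_prod_half_add [Fintype ι] {a b : ι → ℝ≥0∞} (hpos : ∏ i, a i ≠ 0)
    (hfin : ∏ i, a i ≠ ∞) (hprod : ∏ i, a i = ∏ i, b i) (hne : a ≠ b) :
    ∏ i, a i < ∏ i, (a i + b i) / 2 := by
  have hpos' : ∏ i, b i ≠ 0 := hprod ▸ hpos
  have hfin' : ∏ i, b i ≠ ∞ := hprod ▸ hfin
  lift a to ι → ℝ≥0 using fun i => ennreal_ne_top_of_prod_ne_top hpos hfin (Finset.mem_univ i)
  lift b to ι → ℝ≥0 using fun i => ennreal_ne_top_of_prod_ne_top hpos' hfin' (Finset.mem_univ i)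
  have hmid (i : ι) : ((a i : ℝ≥0∞) + b i) / 2 = ((a i + b i) / 2 : ℝ≥0) := by simp
  simp only [hmid, ← ENNReal.ofNNReal_finsetProd, ENNReal.coe_inj, ENNReal.coe_lt_coe] at hprod ⊢
  have hne' : ∃ i, a i ≠ b i := Function.ne_iff.mp fun hab => hne (by rw [hab])
  exact prod_lt_prod_half_add
    (fun i hi => ENNReal.coe_pos.mp (pos_of_ne_zero (Finset.prod_ne_zero_iff.mp hpos i hi)))
    (fun i hi => ENNReal.coe_pos.mp (pos_of_ne_zero (Finset.prod_ne_zero_iff.mp hpos' i hi)))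
    hprod (hne'.imp fun i hi => ⟨Finset.mem_univ i, hi⟩)

end ENNRealProducts

section Mixtures

variable {Θ 𝒴 ι : Type*} [MeasurableSpace Θ]

theorem convex_setOf_isProbabilityMeasure :
    Convex ℝ≥0∞ {G : Measure Θ | IsProbabilityMeasure G} := by
  rintro G₁ ⟨hG₁⟩ G₂ ⟨hG₂⟩ p q - - hpq
  exact ⟨by simp [hG₁, hG₂, hpq]⟩

/-- The mixture density `f_G` of the family `f` under the mixing distribution `G`. Its values may be
infinite, and where `f y` is not measurable, `f_G y` is the lower integral of `f y`. -/
noncomputable def mixtureDensity (f : 𝒴 → Θ → ℝ≥0∞) (G : Measure Θ) (y : 𝒴) : ℝ≥0∞ :=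
  ∫⁻ θ, f y θ ∂G

/-- The likelihood of the mixing distribution `G` given the observations `y i`. A GMLE over a class
`S` of mixing distributions is a `G ∈ S` with `IsMaxOn (mixtureLikelihood f y) S G`. -/
noncomputable def mixtureLikelihood [Fintype ι] (f : 𝒴 → Θ → ℝ≥0∞) (y : ι → 𝒴)
    (G : Measure Θ) : ℝ≥0∞ :=
  ∏ i, mixtureDensity f G (y i)

theorem mixtureDensity_half_add (f : 𝒴 → Θ → ℝ≥0∞) (G₁ G₂ : Measure Θ) (y : 𝒴) :
    mixtureDensity f ((2⁻¹ : ℝ≥0∞) • G₁ + (2⁻¹ : ℝ≥0∞) • G₂) y =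
      (mixtureDensity f G₁ y + mixtureDensity f G₂ y) / 2 := by
  simp only [mixtureDensity, lintegral_add_measure, lintegral_smul_measure, smul_eq_mul,
    ENNReal.div_eq_inv_mul, mul_add]

theorem gmle_mixture_density_eq_at_observations_general [Fintype ι] {f : 𝒴 → Θ → ℝ≥0∞} {y : ι → 𝒴}
    {S : Set (Measure Θ)} (hS : Convex ℝ≥0∞ S) {G₁ G₂ : Measure Θ} (hG₁S : G₁ ∈ S) (hG₂S : G₂ ∈ S)
    (hG₁ : IsMaxOn (mixtureLikelihood f y) S G₁) (hG₂ : IsMaxOn (mixtureLikelihood f y) S G₂)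
    (hpos : mixtureLikelihood f y G₁ ≠ 0) (hfin : mixtureLikelihood f y G₁ ≠ ∞) (i : ι) :
    mixtureDensity f G₁ (y i) = mixtureDensity f G₂ (y i) := by
  by_contra hne
  have hlik : mixtureLikelihood f y G₁ = mixtureLikelihood f y G₂ :=
    le_antisymm (hG₂ hG₁S) (hG₁ hG₂S)
  have hmid : (2⁻¹ : ℝ≥0∞) • G₁ + (2⁻¹ : ℝ≥0∞) • G₂ ∈ S :=
    hS hG₁S hG₂S zero_le zero_le ENNReal.inv_two_add_inv_two
  refine (isMaxOn_iff.mp hG₁ _ hmid).not_gt ?_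
  simpa only [mixtureLikelihood, mixtureDensity_half_add] using
    ennreal_prod_lt_prod_half_add hpos hfin hlik (Function.ne_iff.mpr ⟨i, hne⟩)

end Mixtures

/-- The paper's Lemma 1: if `G₁` and `G₂` are two GMLEs (maximizers of the
likelihood `G ↦ ∏ i, f_G (y i)` over probability measures on `Θ`) and the
maximal likelihood value is strictly positive and finite, then the fitted
mixture densities at every observation coincide: `f_{G₁}(yᵢ) = f_{G₂}(yᵢ)`. -/
theorem gmle_mixture_density_eq_at_observations
    {Θ 𝒴 : Type*} [MeasurableSpace Θ] [MeasurableSpace 𝒴]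
    (μ : Measure 𝒴) [SigmaFinite μ]
    (f : 𝒴 → Θ → ℝ≥0) (hf : Measurable (Function.uncurry f))
    (hf1 : ∀ θ, ∫⁻ y, (f y θ : ℝ≥0∞) ∂μ = 1)
    (n : ℕ) (y : Fin n → 𝒴)
    (G₁ G₂ : Measure Θ) [IsProbabilityMeasure G₁] [IsProbabilityMeasure G₂]
    (hG₁ : ∀ G : Measure Θ, IsProbabilityMeasure G →
      ∏ i : Fin n, ∫⁻ θ, (f (y i) θ : ℝ≥0∞) ∂G ≤
        ∏ i : Fin n, ∫⁻ θ, (f (y i) θ : ℝ≥0∞) ∂G₁)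
    (hG₂ : ∀ G : Measure Θ, IsProbabilityMeasure G →
      ∏ i : Fin n, ∫⁻ θ, (f (y i) θ : ℝ≥0∞) ∂G ≤
        ∏ i : Fin n, ∫⁻ θ, (f (y i) θ : ℝ≥0∞) ∂G₂)
    (hpos : 0 < ∏ i : Fin n, ∫⁻ θ, (f (y i) θ : ℝ≥0∞) ∂G₁)
    (hfin : ∏ i : Fin n, ∫⁻ θ, (f (y i) θ : ℝ≥0∞) ∂G₁ < ⊤) :
    ∀ i : Fin n, ∫⁻ θ, (f (y i) θ : ℝ≥0∞) ∂G₁ = ∫⁻ θ, (f (y i) θ : ℝ≥0∞) ∂G₂ :=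
  gmle_mixture_density_eq_at_observations_general (f := fun y θ => (f y θ : ℝ≥0∞))
    convex_setOf_isProbabilityMeasure ‹IsProbabilityMeasure G₁› ‹IsProbabilityMeasure G₂› hG₁ hG₂
    hpos.ne' hfin.ne
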